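/- Let v₃ = log 3 / log 2 and for real θ define f(θ) = ∑_{α=0}^{∞} (−1)^{α + ⌊θ − v₃·α⌋} · 3^{−(v₃−1)·α − {θ − v₃·α}}, where {·} denotes the fractional part. Then for every real z ≥ 1, |∑_{(α₁,α₂) ∈ ℕ², 2^{α₁}·3^{α₂} ≤ z} (−3)^{α₁+α₂} − (3/4)·z^{v₃}·f(log z / log 2)| ≤ z. -/

import Mathlib

open Finset Real

/-- `f θ = ∑_{α ≥ 0} (-1)^{α + ⌊θ - v₃ α⌋} 3^{-(v₃-1)α - {θ - v₃ α}}` where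
`v₃ = log 3 / log 2`. -/
noncomputable def fOsc (θ : ℝ) : ℝ :=
  ∑' α : ℕ, (-1 : ℝ) ^ ((α : ℤ) + ⌊θ - (Real.log 3 / Real.log 2) * α⌋) *
    (3 : ℝ) ^ (-(Real.log 3 / Real.log 2 - 1) * α - Int.fract (θ - (Real.log 3 / Real.log 2) * α))

/-!
Write `v = log₂ 3`, `θ = log₂ z` and `F(θ) = ∑_α (-3)^(α + ⌊θ - vα⌋)`. Then `z ^ v = 3 ^ θ`, and
multiplying the series `f(θ)` by `3 ^ θ` turns each of its terms into an integer power of `-3`, so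
that `z ^ v f(θ) = F(θ)`. On the other side, `2 ^ a * 3 ^ b ≤ z` means `a ≤ θ - vb`; summing the
geometric progressions in `a` gives, up to a geometric sum in `b`, `3/4` times the partial sum of
`F(θ)` over `b < n`, where `n` is the number of `b` with `vb ≤ θ`. The shift identity
`F(θ) = ∑_{b < n} (-3)^(b + ⌊θ - vb⌋) + (-3)^n F(t)` with `t = θ - vn ∈ [-v, 0)` leaves the error
`1/16 - (-3)^n (1/16 + 3/4 F(t))`, where `3 ^ n = z 2^(-t)`. Since `3/2 ≤ v ≤ 2`, the exponents
in `F(t)` drop by `0` or `1` at each step and never stay constant twice in a row, so `F(t)` is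
`(-3)^⌊t⌋` times a number in `[0, 2]`; as `⌊t⌋` is `-1` or `-2`, this is enough.
-/

section AlternatingSums

variable {x : ℝ} {e : ℕ → ℤ}

lemma sum_range_zpow_div_mem_Icc (hx : x ≤ -2) (h_anti : ∀ j, e (j + 1) ≤ e j)
    (h_step : ∀ j, e j ≤ e (j + 1) + 1) (h_lt : ∀ j, e (j + 2) < e j) (n : ℕ) :
    (∑ j ∈ range n, x ^ e j) / x ^ e 0 ∈ Set.Icc 0 2 := by
  have hx0 : x ≠ 0 := by linarith
  have div_mem {S : ℝ} (hS : S ∈ Set.Icc 0 2) : S / x ∈ Set.Icc (-1) 0 :=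
    ⟨by rw [le_div_iff_of_neg (by linarith)]; linarith [hS.2],
      div_nonpos_of_nonneg_of_nonpos hS.1 (by linarith)⟩
  induction n using Nat.twoStepInduction generalizing e with
  | zero => simp
  | one => simp [zpow_ne_zero _ hx0]
  | more n ih ih_succ =>
    rcases (show e 1 ≤ e 0 from h_anti 0).lt_or_eq with h_drop | h_const
    · have he : e 1 = e 0 - 1 := le_antisymm (Int.le_sub_one_of_lt h_drop) (by linarith [h_step 0])
      have h_tail := div_mem (ih_succ (e := fun j => e (j + 1)) (fun j => h_anti (j + 1))
        (fun j => h_step (j + 1)) (fun j => h_lt (j + 1)))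
      have h_split : (∑ j ∈ range (n + 2), x ^ e j) / x ^ e 0 =
          (∑ j ∈ range (n + 1), x ^ e (j + 1)) / x ^ e 1 / x + 1 := by
        rw [sum_range_succ', he, zpow_sub_one₀ hx0]
        field_simp
      rw [h_split]
      exact ⟨by linarith [h_tail.1], by linarith [h_tail.2]⟩
    · have he : e 2 = e 0 - 1 := by
        have h_lt_zero : e 2 < e 0 := h_lt 0
        have h_step_one : e 1 ≤ e 2 + 1 := h_step 1
        omega
      have h_tail := div_mem (ih (e := fun j => e (j + 2)) (fun j => h_anti (j + 2))
        (fun j => h_step (j + 2)) (fun j => h_lt (j + 2)))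
      have h_split : (∑ j ∈ range (n + 2), x ^ e j) / x ^ e 0 =
          (∑ j ∈ range n, x ^ e (j + 2)) / x ^ e 2 / x + 2 := by
        rw [sum_range_succ', sum_range_succ', h_const, he, zpow_sub_one₀ hx0]
        field_simp
        ring
      rw [h_split]
      exact ⟨by linarith [h_tail.1], by linarith [h_tail.2]⟩

lemma tsum_zpow_div_mem_Icc (hx : x ≤ -2) (h_anti : ∀ j, e (j + 1) ≤ e j)
    (h_step : ∀ j, e j ≤ e (j + 1) + 1) (h_lt : ∀ j, e (j + 2) < e j)
    (h_sum : Summable fun j => x ^ e j) :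
    (∑' j, x ^ e j) / x ^ e 0 ∈ Set.Icc 0 2 :=
  isClosed_Icc.mem_of_tendsto (h_sum.hasSum.tendsto_sum_nat.div_const _)
    (.of_forall (sum_range_zpow_div_mem_Icc hx h_anti h_step h_lt))

end AlternatingSums

/-- The integer exponent `α + ⌊θ - v α⌋` of the `α`-th term of the series `fOsc`, for an arbitrary
slope `v` in place of `v₃`. -/
noncomputable def oscExponent (v θ : ℝ) (α : ℕ) : ℤ := α + ⌊θ - v * α⌋

/-- The series `∑_α x ^ (α + ⌊θ - v α⌋)`; for `x = -3` and `v = v₃` it is `3 ^ θ * fOsc θ`. -/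
noncomputable def oscSeries (x v θ : ℝ) : ℝ := ∑' α : ℕ, x ^ oscExponent v θ α

section OscExponent

variable {v : ℝ} (θ : ℝ)

lemma oscExponent_zero : oscExponent v θ 0 = ⌊θ⌋ := by
  simp [oscExponent]

lemma oscExponent_add (α n : ℕ) :
    oscExponent v θ (α + n) = n + oscExponent v (θ - v * n) α := by
  have : θ - v * (α + n : ℕ) = θ - v * n - v * α := by push_cast; ring
  rw [oscExponent, oscExponent, this]
  push_cast
  ring

lemma oscExponent_succ_le (hv : 1 ≤ v) (α : ℕ) :
    oscExponent v θ (α + 1) ≤ oscExponent v θ α := by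
  have h_floor : ⌊θ - v * (α + 1 : ℕ)⌋ ≤ ⌊θ - v * α - 1⌋ :=
    Int.floor_mono (by push_cast; linarith)
  rw [Int.floor_sub_one] at h_floor
  simp only [oscExponent]
  omega

lemma oscExponent_le_succ_add_one (hv : v ≤ 2) (α : ℕ) :
    oscExponent v θ α ≤ oscExponent v θ (α + 1) + 1 := by
  have h_floor : ⌊θ - v * α - (2 : ℕ)⌋ ≤ ⌊θ - v * (α + 1 : ℕ)⌋ :=
    Int.floor_mono (by push_cast; linarith)
  rw [Int.floor_sub_natCast] at h_floor
  simp only [oscExponent]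
  omega

lemma oscExponent_add_two_lt (hv : 3 / 2 ≤ v) (α : ℕ) :
    oscExponent v θ (α + 2) < oscExponent v θ α := by
  have h_floor : ⌊θ - v * (α + 2 : ℕ)⌋ ≤ ⌊θ - v * α - (3 : ℕ)⌋ :=
    Int.floor_mono (by push_cast; linarith)
  rw [Int.floor_sub_natCast] at h_floor
  simp only [oscExponent]
  omega

end OscExponent

section OscSeries

variable {x v : ℝ} (θ : ℝ)

lemma summable_zpow_oscExponent (hx : 1 < |x|) (hv : 1 < v) :
    Summable fun α => x ^ oscExponent v θ α := by
  have hx0 : 0 < |x| := by linarith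
  have h_geom : Summable fun α : ℕ => |x| ^ θ * (|x| ^ (1 - v)) ^ α :=
    (summable_geometric_of_lt_one (by positivity)
      (rpow_lt_one_of_one_lt_of_neg hx (by linarith))).mul_left _
  refine h_geom.of_norm_bounded fun α => ?_
  rw [norm_zpow, norm_eq_abs, ← rpow_intCast, ← rpow_natCast, ← rpow_mul hx0.le, ← rpow_add hx0]
  refine rpow_le_rpow_of_exponent_le hx.le ?_
  rw [oscExponent]
  push_cast
  linarith [Int.floor_le (θ - v * α)]

lemma oscSeries_eq_sum_range_add (hx : 1 < |x|) (hv : 1 < v) (n : ℕ) :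
    oscSeries x v θ =
      ∑ α ∈ range n, x ^ oscExponent v θ α + x ^ n * oscSeries x v (θ - v * n) := by
  have hx0 : x ≠ 0 := abs_pos.mp (by linarith)
  simp only [oscSeries, ← (summable_zpow_oscExponent θ hx hv).sum_add_tsum_nat_add n,
    oscExponent_add, zpow_add₀ hx0, zpow_natCast, tsum_mul_left]

lemma oscSeries_div_zpow_floor_mem_Icc (hx : x ≤ -2) (hv : 3 / 2 ≤ v) (hv' : v ≤ 2) :
    oscSeries x v θ / x ^ ⌊θ⌋ ∈ Set.Icc 0 2 := by
  have hx_abs : 1 < |x| := lt_abs.mpr (.inr (by linarith))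
  rw [← oscExponent_zero (v := v) θ]
  exact tsum_zpow_div_mem_Icc hx (oscExponent_succ_le θ (by linarith))
    (oscExponent_le_succ_add_one θ hv') (oscExponent_add_two_lt θ hv)
    (summable_zpow_oscExponent θ hx_abs (by linarith))

end OscSeries

lemma rpow_mul_neg_one_zpow_mul_rpow {b : ℝ} (hb : 0 < b) (v θ : ℝ) (α : ℕ) :
    b ^ θ * ((-1) ^ ((α : ℤ) + ⌊θ - v * α⌋) * b ^ (-(v - 1) * α - Int.fract (θ - v * α))) =
      (-b) ^ oscExponent v θ α := by
  have h_exponent : θ + (-(v - 1) * α - Int.fract (θ - v * α)) = oscExponent v θ α := by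
    rw [oscExponent, Int.fract]
    push_cast
    ring
  rw [mul_left_comm, ← rpow_add hb, h_exponent, rpow_intCast, ← oscExponent, ← mul_zpow,
    neg_one_mul]

lemma rpow_mul_fOsc (θ : ℝ) : 3 ^ θ * fOsc θ = oscSeries (-3) (logb 2 3) θ := by
  simp only [fOsc, log_div_log, ← tsum_mul_left, rpow_mul_neg_one_zpow_mul_rpow three_pos,
    oscSeries]

section LatticePoints

variable {v θ : ℝ}

lemma sum_range_pow_add {𝕜 : Type*} [Field 𝕜] {x : 𝕜} (hx : x ≠ 1) (b n : ℕ) :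
    ∑ a ∈ range (n + 1), x ^ (a + b) = (x ^ b - x * x ^ (b + n)) / (1 - x) := by
  simp only [pow_add _ _ b, ← sum_mul]
  rw [eq_div_iff (sub_ne_zero.mpr hx.symm), mul_comm, ← mul_assoc, mul_neg_geom_sum]
  ring

lemma le_floor_div_iff (hv : 0 < v) (hθ : 0 ≤ θ) (b : ℕ) : b ≤ ⌊θ / v⌋₊ ↔ v * b ≤ θ := by
  rw [Nat.le_floor_iff (by positivity), le_div_iff₀' hv]

lemma sub_mul_floor_div_add_one_mem_Ico (hv : 0 < v) (hθ : 0 ≤ θ) :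
    θ - v * (⌊θ / v⌋₊ + 1 : ℕ) ∈ Set.Ico (-v) 0 := by
  have h_le := (le_floor_div_iff hv hθ ⌊θ / v⌋₊).mp le_rfl
  have h_lt := mt (le_floor_div_iff hv hθ (⌊θ / v⌋₊ + 1)).mpr (by simp)
  push_cast at h_le h_lt ⊢
  exact ⟨by linarith, by linarith⟩

lemma sum_pow_add_of_mem_iff_add_mul_le {𝕜 : Type*} [Field 𝕜] {x : 𝕜} (hx : x ≠ 1) (hv : 0 < v)
    (hθ : 0 ≤ θ) {s : Finset (ℕ × ℕ)} (hs : ∀ q, q ∈ s ↔ q.1 + v * q.2 ≤ θ) :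
    ∑ q ∈ s, x ^ (q.1 + q.2) = (1 - x ^ (⌊θ / v⌋₊ + 1)) / (1 - x) ^ 2 -
      x / (1 - x) * ∑ b ∈ range (⌊θ / v⌋₊ + 1), x ^ oscExponent v θ b := by
  have h_fibre (q : ℕ × ℕ) :
      q ∈ s ↔ q.2 ∈ range (⌊θ / v⌋₊ + 1) ∧ q.1 ∈ range (⌊θ - v * q.2⌋₊ + 1) := by
    rw [hs, mem_range_succ_iff, mem_range_succ_iff, le_floor_div_iff hv hθ]
    constructor
    · intro hq
      have : (0 : ℝ) ≤ q.1 := q.1.cast_nonneg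
      exact ⟨by linarith, Nat.le_floor (by linarith)⟩
    · rintro ⟨h_snd, h_fst⟩
      linarith [(Nat.le_floor_iff (sub_nonneg.mpr h_snd)).mp h_fst]
  have h_row : ∀ b ∈ range (⌊θ / v⌋₊ + 1), ∑ a ∈ range (⌊θ - v * b⌋₊ + 1), x ^ (a + b) =
      x ^ b / (1 - x) - x / (1 - x) * x ^ oscExponent v θ b := by
    intro b hb
    rw [mem_range_succ_iff, le_floor_div_iff hv hθ] at hb
    rw [sum_range_pow_add hx, oscExponent, ← Int.natCast_floor_eq_floor (sub_nonneg.mpr hb),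
      ← Nat.cast_add, zpow_natCast]
    ring
  rw [sum_finset_product_right s _ (fun b => range (⌊θ - v * b⌋₊ + 1)) h_fibre,
    sum_congr rfl h_row, sum_sub_distrib, ← mul_sum, ← sum_div, ← mul_neg_geom_sum, sq,
    mul_div_mul_left _ _ (sub_ne_zero.mpr hx.symm)]

end LatticePoints

lemma pow_mul_pow_le_iff_add_logb_mul_le {p q z : ℝ} (hp : 1 < p) (hq : 0 < q) (hz : 0 < z)
    (a b : ℕ) : p ^ a * q ^ b ≤ z ↔ a + logb p q * b ≤ logb p z := by
  have hpa : 0 < p ^ a := pow_pos (by linarith) a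
  have hqb : 0 < q ^ b := pow_pos hq b
  rw [← logb_le_logb hp (mul_pos hpa hqb) hz, logb_mul hpa.ne' hqb.ne', logb_pow, logb_pow,
    logb_self_eq_one hp, mul_one, mul_comm (b : ℝ)]

lemma le_and_le_of_pow_mul_pow_le {p q a b n : ℕ} (hp : 1 < p) (hq : 1 < q)
    (h : p ^ a * q ^ b ≤ n) : a ≤ n ∧ b ≤ n :=
  ⟨(Nat.lt_pow_self hp).le.trans ((Nat.le_mul_of_pos_right _ (by positivity)).trans h),
    (Nat.lt_pow_self hq).le.trans ((Nat.le_mul_of_pos_left _ (by positivity)).trans h)⟩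

lemma mem_filter_two_pow_mul_three_pow_le_iff {z : ℝ} (hz : 0 < z) (q : ℕ × ℕ) :
    q ∈ (range (⌊z⌋₊ + 1) ×ˢ range (⌊z⌋₊ + 1)).filter
        (fun q => ((2 ^ q.1 * 3 ^ q.2 : ℕ) : ℝ) ≤ z) ↔
      q.1 + logb 2 3 * q.2 ≤ logb 2 z := by
  rw [← pow_mul_pow_le_iff_add_logb_mul_le one_lt_two three_pos hz, mem_filter, mem_product,
    mem_range_succ_iff, mem_range_succ_iff]
  push_cast
  refine and_iff_right_of_imp fun hq => ?_
  exact le_and_le_of_pow_mul_pow_le one_lt_two (by norm_num : 1 < 3)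
    (Nat.le_floor (by exact_mod_cast hq))

lemma three_halves_le_logb_two_three : 3 / 2 ≤ logb 2 3 := by
  have h : logb 2 (2 ^ 3) ≤ logb 2 (3 ^ 2) :=
    logb_le_logb_of_le one_lt_two (by norm_num) (by norm_num)
  rw [logb_pow, logb_pow, logb_self_eq_one one_lt_two] at h
  push_cast at h
  linarith

lemma logb_two_three_le_two : logb 2 3 ≤ 2 := by
  rw [logb_le_iff_le_rpow one_lt_two three_pos]
  norm_num

lemma rpow_logb_comm {b x y : ℝ} (hx : 0 < x) (hy : 0 < y) : x ^ logb b y = y ^ logb b x := by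
  rw [rpow_def_of_pos hx, rpow_def_of_pos hy, logb, logb]
  congr 1
  ring

lemma pow_eq_mul_rpow_neg_sub_logb_mul {p q z : ℝ} (hp : 1 < p) (hq : 0 < q) (hz : 0 < z)
    (n : ℕ) : q ^ n = z * p ^ (-(logb p z - logb p q * n)) := by
  have hp0 : 0 < p := by linarith
  rw [neg_sub, rpow_sub hp0, rpow_mul hp0.le, rpow_logb hp0 hp.ne' hq, rpow_logb hp0 hp.ne' hz,
    rpow_natCast, mul_div_cancel₀ _ hz.ne']

lemma two_rpow_neg_mul_abs_oscSeries_le {t : ℝ} (ht : -logb 2 3 ≤ t) (ht0 : t < 0) :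
    2 ^ (-t) * |1 / 16 + 3 / 4 * oscSeries (-3) (logb 2 3) t| ≤ 7 / 8 := by
  have h_ratio := oscSeries_div_zpow_floor_mem_Icc (x := -3) t (by norm_num)
    three_halves_le_logb_two_three logb_two_three_le_two
  rcases le_or_gt (-1) t with h | h
  · have h_floor : ⌊t⌋ = -1 :=
      Int.floor_eq_iff.mpr ⟨by push_cast; linarith, by push_cast; linarith⟩
    have h_pow : (2 : ℝ) ^ (-t) ≤ 2 := rpow_le_self_of_one_le one_le_two (by linarith)
    have h_abs : |1 / 16 + 3 / 4 * oscSeries (-3) (logb 2 3) t| ≤ 7 / 16 := by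
      rw [h_floor, show (-3 : ℝ) ^ (-1 : ℤ) = -1 / 3 by norm_num, Set.mem_Icc] at h_ratio
      exact abs_le.mpr ⟨by linarith, by linarith⟩
    calc _ ≤ (2 : ℝ) * (7 / 16) := by gcongr
      _ = 7 / 8 := by norm_num
  · have h_floor : ⌊t⌋ = -2 :=
      Int.floor_eq_iff.mpr
        ⟨by push_cast; linarith [logb_two_three_le_two], by push_cast; linarith⟩
    have h_pow : (2 : ℝ) ^ (-t) ≤ 3 := by
      rw [← le_logb_iff_rpow_le one_lt_two three_pos]
      linarith
    have h_abs : |1 / 16 + 3 / 4 * oscSeries (-3) (logb 2 3) t| ≤ 11 / 48 := by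
      rw [h_floor, show (-3 : ℝ) ^ (-2 : ℤ) = 1 / 9 by norm_num, Set.mem_Icc] at h_ratio
      exact abs_le.mpr ⟨by linarith, by linarith⟩
    calc _ ≤ (3 : ℝ) * (11 / 48) := by gcongr
      _ ≤ 7 / 8 := by norm_num

theorem sum_pow_two_three_approx (z : ℝ) (hz : 1 ≤ z) :
    |(∑ q ∈ (Finset.range (⌊z⌋₊ + 1) ×ˢ Finset.range (⌊z⌋₊ + 1)).filter
          (fun q => ((2 ^ q.1 * 3 ^ q.2 : ℕ) : ℝ) ≤ z),
        (-3 : ℝ) ^ (q.1 + q.2)) -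
      3 / 4 * z ^ (Real.log 3 / Real.log 2) * fOsc (Real.log z / Real.log 2)| ≤ z := by
  have hz0 : 0 < z := by linarith
  have hv := three_halves_le_logb_two_three
  have hθ : 0 ≤ logb 2 z := logb_nonneg one_lt_two hz
  rw [log_div_log, log_div_log, mul_assoc, rpow_logb_comm hz0 three_pos, rpow_mul_fOsc,
    sum_pow_add_of_mem_iff_add_mul_le (by norm_num) (by linarith) hθ
      (mem_filter_two_pow_mul_three_pow_le_iff hz0)]
  obtain ⟨ht, ht0⟩ := sub_mul_floor_div_add_one_mem_Ico (by linarith : 0 < logb 2 3) hθ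
  set n := ⌊logb 2 z / logb 2 3⌋₊ + 1
  set t := logb 2 z - logb 2 3 * n
  rw [oscSeries_eq_sum_range_add _ (by norm_num) (by linarith) n]
  set F := oscSeries (-3) (logb 2 3) t
  set P := ∑ b ∈ range n, (-3 : ℝ) ^ oscExponent (logb 2 3) (logb 2 z) b
  calc _ = |1 / 16 - (-3) ^ n * (1 / 16 + 3 / 4 * F)| := by congr 1; ring
    _ ≤ 1 / 16 + 3 ^ n * |1 / 16 + 3 / 4 * F| := by
      refine (abs_sub _ _).trans_eq ?_
      rw [abs_mul, abs_pow]
      norm_num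
    _ = 1 / 16 + z * (2 ^ (-t) * |1 / 16 + 3 / 4 * F|) := by
      rw [pow_eq_mul_rpow_neg_sub_logb_mul one_lt_two three_pos hz0, mul_assoc]
    _ ≤ 1 / 16 + z * (7 / 8) := by gcongr; exact two_rpow_neg_mul_abs_oscSeries_le ht ht0
    _ ≤ z := by linarith
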